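/- arXiv:2003.05572 — 2 statements merged into one kernel-verified Lean document; each statement's English description precedes it below -/
import Mathlib

section
/- For every t > 0 and ε > 0 the function x ↦ S_ε(x,t) is differentiable on ℝⁿ, and the posterior mean estimate satisfies u_PM(x,t,ε) = x − t ∇ₓS_ε(x,t); equivalently ∇ₓS_ε(x,t) = (x − E_J[y])/t. -/
open scoped Topology
open Filter MeasureTheory

/-- The integrand `exp(−(‖x−y‖²/(2t) + J(y))/ε)`, with the convention `exp(−∞) = 0`. -/
noncomputable def heatIntegrand (n : ℕ) (J : EuclideanSpace ℝ (Fin n) → EReal)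
    (x : EuclideanSpace ℝ (Fin n)) (t ε : ℝ) (y : EuclideanSpace ℝ (Fin n)) : ℝ :=
  if J y = ⊤ then 0 else Real.exp (-((‖x - y‖ ^ 2 / (2 * t) + (J y).toReal) / ε))

/-- The partition function `Z_J(x,t,ε) = ∫ exp(−(‖x−y‖²/(2t) + J(y))/ε) dy`. -/
noncomputable def partitionFn (n : ℕ) (J : EuclideanSpace ℝ (Fin n) → EReal)
    (x : EuclideanSpace ℝ (Fin n)) (t ε : ℝ) : ℝ :=
  ∫ y, heatIntegrand n J x t ε y

/-- The posterior mean estimate `u_PM(x,t,ε) = E_J[y]`. -/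
noncomputable def postMean (n : ℕ) (J : EuclideanSpace ℝ (Fin n) → EReal)
    (x : EuclideanSpace ℝ (Fin n)) (t ε : ℝ) : EuclideanSpace ℝ (Fin n) :=
  (partitionFn n J x t ε)⁻¹ • ∫ y, heatIntegrand n J x t ε y • y

/-- `S_ε(x,t) = −ε ln((2πtε)^{−n/2} Z_J(x,t,ε))`. -/
noncomputable def viscSol (n : ℕ) (J : EuclideanSpace ℝ (Fin n) → EReal)
    (x : EuclideanSpace ℝ (Fin n)) (t ε : ℝ) : ℝ :=
  -ε * Real.log ((2 * Real.pi * t * ε) ^ (-(n : ℝ) / 2) * partitionFn n J x t ε)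


/-- Integrability of a Gaussian centred at `x`. -/
lemma gauss_integrable (n : ℕ) (x : EuclideanSpace ℝ (Fin n)) (b : ℝ) (hb : 0 < b) :
    Integrable (fun y : EuclideanSpace ℝ (Fin n) => Real.exp (-b * ‖x - y‖ ^ 2)) := by
  have h := (GaussianFourier.integrable_cexp_neg_mul_sq_norm_add
    (V := EuclideanSpace ℝ (Fin n)) (b := (b : ℂ)) (by simpa using hb) 0 0).norm
  have h2 : Integrable (fun y : EuclideanSpace ℝ (Fin n) => Real.exp (-b * ‖y‖ ^ 2)) := by
    refine h.congr (Eventually.of_forall fun y => ?_)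
    simp only [Complex.norm_exp]
    congr 1
    simp [← Complex.ofReal_pow, ← Complex.ofReal_mul]
  exact h2.comp_sub_left x

/-- Pointwise bound used for domination. -/
lemma gauss_bound (n : ℕ) (x z y : EuclideanSpace ℝ (Fin n)) (a : ℝ) (ha : 0 < a)
    (hz : ‖z - x‖ ≤ 1) :
    Real.exp (-a * ‖z - y‖ ^ 2) * ‖z - y‖ ≤
      (1 + 2 / a) * Real.exp (a / 2) * Real.exp (-(a / 4) * ‖x - y‖ ^ 2) := by
  set u := ‖z - y‖ with hu
  have hu0 : 0 ≤ u := norm_nonneg _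
  have h1 : ‖x - y‖ ≤ 1 + u := by
    calc ‖x - y‖ = ‖(z - y) - (z - x)‖ := by congr 1; abel
      _ ≤ ‖z - y‖ + ‖z - x‖ := norm_sub_le _ _
      _ ≤ 1 + u := by linarith
  have h2 : ‖x - y‖ ^ 2 ≤ 2 + 2 * u ^ 2 := by
    nlinarith [norm_nonneg (x - y), sq_nonneg (1 - u)]
  have h3 : u ≤ (1 + 2 / a) * Real.exp (a / 2 * u ^ 2) := by
    have h4 := Real.add_one_le_exp (a / 2 * u ^ 2)
    have h5 : (1 + 2 / a) * (a / 2 * u ^ 2 + 1) = 1 + u ^ 2 + (a / 2 * u ^ 2 + 2 / a) := by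
      field_simp; ring
    have h6 : 0 ≤ a / 2 * u ^ 2 + 2 / a := by positivity
    have h7 := mul_le_mul_of_nonneg_left h4 (by positivity : (0:ℝ) ≤ 1 + 2 / a)
    nlinarith [sq_nonneg (u - 1)]
  calc Real.exp (-a * u ^ 2) * u
      ≤ Real.exp (-a * u ^ 2) * ((1 + 2 / a) * Real.exp (a / 2 * u ^ 2)) := by gcongr
    _ = (1 + 2 / a) * Real.exp (-(a / 2) * u ^ 2) := by
        rw [mul_left_comm, ← Real.exp_add]; congr 2; ring
    _ ≤ (1 + 2 / a) * Real.exp (a / 2 + -(a / 4) * ‖x - y‖ ^ 2) := by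
        gcongr; nlinarith
    _ = _ := by rw [Real.exp_add]; ring

lemma smul_integrable (n : ℕ) (g : EuclideanSpace ℝ (Fin n) → ℝ) (hg : Measurable g)
    (hg0 : ∀ y, 0 ≤ g y) (hg1 : ∀ y, g y ≤ 1) (a : ℝ) (ha : 0 < a)
    (x : EuclideanSpace ℝ (Fin n)) :
    Integrable (fun y => g y * Real.exp (-a * ‖x - y‖ ^ 2)) ∧
    Integrable (fun y => (g y * Real.exp (-a * ‖x - y‖ ^ 2)) • (x - y)) := by
  constructor
  · refine (gauss_integrable n x a ha).mono' ?_ (Eventually.of_forall fun y => ?_)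
    · exact (by fun_prop : Measurable _).aestronglyMeasurable
    · rw [Real.norm_of_nonneg (mul_nonneg (hg0 y) (Real.exp_nonneg _))]
      exact mul_le_of_le_one_left (Real.exp_nonneg _) (hg1 y)
  · refine (((gauss_integrable n x (a / 4) (by positivity))).const_mul
      ((1 + 2 / a) * Real.exp (a / 2))).mono' ?_ (Eventually.of_forall fun y => ?_)
    · exact (by fun_prop : Measurable _).aestronglyMeasurable
    · rw [norm_smul, Real.norm_of_nonneg (mul_nonneg (hg0 y) (Real.exp_nonneg _)), mul_assoc]
      exact (mul_le_of_le_one_left (by positivity) (hg1 y)).trans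
        (gauss_bound n x x y a ha (by simp))

lemma integral_hasFDerivAt (n : ℕ) (g : EuclideanSpace ℝ (Fin n) → ℝ) (hg : Measurable g)
    (hg0 : ∀ y, 0 ≤ g y) (hg1 : ∀ y, g y ≤ 1) (a : ℝ) (ha : 0 < a)
    (x : EuclideanSpace ℝ (Fin n)) :
    HasFDerivAt (fun z => ∫ y, g y * Real.exp (-a * ‖z - y‖ ^ 2))
      (innerSL ℝ ((-2 * a) • ∫ y, (g y * Real.exp (-a * ‖x - y‖ ^ 2)) • (x - y))) x := by
  have hI := smul_integrable n g hg hg0 hg1 a ha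
  have key := hasFDerivAt_integral_of_dominated_of_fderiv_le (𝕜 := ℝ) (μ := volume)
    (F := fun z y => g y * Real.exp (-a * ‖z - y‖ ^ 2))
    (F' := fun z y => innerSL ℝ ((-2 * a) • (g y * Real.exp (-a * ‖z - y‖ ^ 2)) • (z - y)))
    (x₀ := x) (s := Metric.ball x 1)
    (bound := fun y => (2 * a) * ((1 + 2 / a) * Real.exp (a / 2) *
      Real.exp (-(a / 4) * ‖x - y‖ ^ 2)))
    (Metric.ball_mem_nhds x one_pos)
    (Eventually.of_forall fun z => (hI z).1.aestronglyMeasurable)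
    (hI x).1
    ((innerSL ℝ).continuous.comp_aestronglyMeasurable
      ((hI x).2.smul (-2 * a)).aestronglyMeasurable)
    (Eventually.of_forall fun y z hz => ?_)
    (((gauss_integrable n x (a / 4) (by positivity)).const_mul _).const_mul _)
    (Eventually.of_forall fun y z hz => ?_)
  · have h1 := ((innerSL ℝ : EuclideanSpace ℝ (Fin n) →L[ℝ] _)).integral_comp_comm
      ((hI x).2.smul (-2 * a))
    have h2 : (∫ y, innerSL ℝ ((-2 * a) • (g y * Real.exp (-a * ‖x - y‖ ^ 2)) • (x - y)))
      = innerSL ℝ ((-2 * a) • ∫ y, (g y * Real.exp (-a * ‖x - y‖ ^ 2)) • (x - y)) := by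
      rw [← integral_smul]; exact h1
    rw [← h2]
    exact key
  · rw [innerSL_apply_norm, norm_smul, norm_smul,
      Real.norm_of_nonneg (mul_nonneg (hg0 y) (Real.exp_nonneg _)), mul_assoc (g y)]
    have : ‖-2 * a‖ = 2 * a := by
      rw [Real.norm_eq_abs, abs_of_neg (by linarith)]; ring
    rw [this]
    refine mul_le_mul_of_nonneg_left ?_ (by positivity)
    refine (mul_le_of_le_one_left (by positivity) (hg1 y)).trans
        (gauss_bound n x z y a ha ?_)
    rw [Metric.mem_ball, dist_eq_norm] at hz
    exact hz.le
  · have h1 : HasFDerivAt (fun z : EuclideanSpace ℝ (Fin n) => ‖z - y‖ ^ 2)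
        (2 • (innerSL ℝ (z - y))) z := by
      simpa using ((hasFDerivAt_id z).sub_const y).norm_sq
    have h2 := ((h1.const_mul (-a)).exp).const_mul (g y)
    refine h2.congr_fderiv (ContinuousLinearMap.ext fun v => ?_)
    simp only [map_smul, ContinuousLinearMap.smul_apply, smul_eq_mul, nsmul_eq_mul]
    push_cast
    ring

/-- For every `t > 0` and `ε > 0`, `x ↦ S_ε(x,t)` is differentiable on `ℝⁿ` and the
posterior mean estimate satisfies `u_PM(x,t,ε) = x − t ∇ₓS_ε(x,t)`. -/
theorem postMean_eq_gradient_viscSol (n : ℕ) (hn : 1 ≤ n)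
    (J : EuclideanSpace ℝ (Fin n) → EReal)
    (hJ_proper_bot : ∀ y, J y ≠ ⊥)
    (hJ_lsc : LowerSemicontinuous J)
    (hJ_convex : ∀ y₁ y₂ : EuclideanSpace ℝ (Fin n), ∀ a b : ℝ, 0 ≤ a → 0 ≤ b → a + b = 1 →
      J (a • y₁ + b • y₂) ≤ (a : EReal) * J y₁ + (b : EReal) * J y₂)
    (hJ_int : (interior {y : EuclideanSpace ℝ (Fin n) | J y ≠ ⊤}).Nonempty)
    (hJ_inf : (⨅ y : EuclideanSpace ℝ (Fin n), J y) = (0 : EReal))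
    (t ε : ℝ) (ht : 0 < t) (hε : 0 < ε) :
    (∀ x : EuclideanSpace ℝ (Fin n),
      DifferentiableAt ℝ (fun z : EuclideanSpace ℝ (Fin n) => viscSol n J z t ε) x) ∧
    (∀ x : EuclideanSpace ℝ (Fin n),
      postMean n J x t ε
        = x - t • gradient (fun z : EuclideanSpace ℝ (Fin n) => viscSol n J z t ε) x) := by
  have hJ0 : ∀ y, 0 ≤ J y := fun y => hJ_inf ▸ iInf_le J y
  have hJm : Measurable J := hJ_lsc.measurable
  set g : EuclideanSpace ℝ (Fin n) → ℝ :=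
    fun y => if J y = ⊤ then 0 else Real.exp (-((J y).toReal / ε)) with hgdef
  have hgm : Measurable g := by
    refine Measurable.ite (hJm (measurableSet_singleton ⊤)) measurable_const ?_
    exact Real.measurable_exp.comp ((hJm.ereal_toReal.div_const ε).neg)
  have hg0 : ∀ y, 0 ≤ g y := by
    intro y; simp only [hgdef]; split_ifs <;> positivity
  have hg1 : ∀ y, g y ≤ 1 := by
    intro y; simp only [hgdef]; split_ifs
    · exact zero_le_one
    · have : 0 ≤ (J y).toReal := EReal.toReal_nonneg (hJ0 y)
      rw [Real.exp_le_one_iff]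
      have : 0 ≤ (J y).toReal / ε := by positivity
      linarith
  set a : ℝ := 1 / (2 * t * ε) with hadef
  have ha : 0 < a := by positivity
  have hh : ∀ x y, heatIntegrand n J x t ε y = g y * Real.exp (-a * ‖x - y‖ ^ 2) := by
    intro x y
    simp only [heatIntegrand, hgdef]
    split_ifs
    · simp
    · rw [← Real.exp_add]
      congr 1
      rw [hadef]; field_simp; ring
  have hI := smul_integrable n g hgm hg0 hg1 a ha
  have hZ : ∀ x, partitionFn n J x t ε = ∫ y, g y * Real.exp (-a * ‖x - y‖ ^ 2) := by
    intro x; simp only [partitionFn, hh]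
  have hZpos : ∀ x, 0 < partitionFn n J x t ε := by
    intro x
    rw [hZ, integral_pos_iff_support_of_nonneg
      (fun y => mul_nonneg (hg0 y) (Real.exp_nonneg _)) (hI x).1]
    refine (isOpen_interior.measure_pos volume hJ_int).trans_le (measure_mono ?_)
    intro y hy
    have hy' : J y ≠ ⊤ := interior_subset hy
    simp only [Function.mem_support, hgdef, if_neg hy']
    positivity
  have hgrad : ∀ x, HasGradientAt (fun z => viscSol n J z t ε)
      (t⁻¹ • (x - postMean n J x t ε)) x := by
    intro x
    have hd := integral_hasFDerivAt n g hgm hg0 hg1 a ha x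
    have hc : 0 < (2 * Real.pi * t * ε) ^ (-(n : ℝ) / 2) := by positivity
    simp only [← hZ] at hd
    have hZx := hZpos x
    have h1 := ((hd.const_mul ((2 * Real.pi * t * ε) ^ (-(n : ℝ) / 2))).log
      (mul_pos hc hZx).ne').const_mul (-ε)
    rw [hasGradientAt_iff_hasFDerivAt]
    have hM : ∫ y, (g y * Real.exp (-a * ‖x - y‖ ^ 2)) • (x - y)
        = partitionFn n J x t ε • (x - postMean n J x t ε) := by
      have hy : Integrable (fun y => (g y * Real.exp (-a * ‖x - y‖ ^ 2)) • y) := by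
        refine (((hI x).1.smul_const x).sub (hI x).2).congr (Eventually.of_forall fun y => ?_)
        simp [smul_sub]
      simp only [smul_sub]
      rw [integral_sub ((hI x).1.smul_const x) hy, integral_smul_const, ← hZ]
      congr 1
      simp only [postMean, hh]
      rw [smul_inv_smul₀ hZx.ne']
    rw [hM] at h1
    refine h1.congr_fderiv (ContinuousLinearMap.ext fun v => ?_)
    simp only [InnerProductSpace.toDual_apply_apply, innerSL_apply_apply, inner_smul_left,
      ContinuousLinearMap.smul_apply, smul_eq_mul, conj_trivial]
    rw [hadef]
    field_simp
  refine ⟨fun x => (hgrad x).differentiableAt, fun x => ?_⟩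
  rw [(hgrad x).gradient, smul_inv_smul₀ ht.ne']
  abel
end

section
/- For every x ∈ ℝⁿ, t > 0 and ε > 0, the posterior mean squared error satisfies E_J[‖y − u_PM(x,t,ε)‖²] = tε ∇ₓ·u_PM(x,t,ε) = ntε − t²ε ΔₓS_ε(x,t), where ∇ₓ· denotes the divergence in x of the (differentiable) map x ↦ u_PM(x,t,ε) and Δₓ denotes the Laplacian in x of the (twice differentiable) map x ↦ S_ε(x,t). -/
open scoped Topology
open Filter MeasureTheory

/-- The divergence `∇·u(x) = ∑ᵢ ∂uᵢ/∂xᵢ (x)` of a vector field `u : ℝⁿ → ℝⁿ`. -/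
noncomputable def divergence (n : ℕ) (u : EuclideanSpace ℝ (Fin n) → EuclideanSpace ℝ (Fin n))
    (x : EuclideanSpace ℝ (Fin n)) : ℝ :=
  ∑ i : Fin n, (fderiv ℝ u x (EuclideanSpace.single i 1)) i

section helpers

variable {V : Type*} [NormedAddCommGroup V] [InnerProductSpace ℝ V] [FiniteDimensional ℝ V]
  [MeasurableSpace V] [BorelSpace V]

lemma aux_gauss_integrable {b : ℝ} (hb : 0 < b) (x : V) :
    Integrable (fun y : V => Real.exp (-b * ‖x - y‖ ^ 2)) := by
  have h := (GaussianFourier.integrable_cexp_neg_mul_sq_norm_add (V := V) (b := (b : ℂ))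
    (by simpa using hb) 0 0).norm
  have h2 : Integrable (fun v : V => Real.exp (-b * ‖v‖ ^ 2)) := by
    refine h.congr (Eventually.of_forall fun v => ?_)
    simp only [Complex.norm_exp]
    congr 1
    have : ((‖v‖ : ℂ) ^ 2).re = ‖v‖ ^ 2 := by norm_cast
    simp [this]
  exact h2.comp_sub_left x

lemma aux_poly_le {b : ℝ} (hb : 0 < b) (r : ℝ) :
    (1 + r) ^ 2 * Real.exp (-b * r ^ 2) ≤ (2 + 4 / b) * Real.exp (-(b / 2) * r ^ 2) := by
  have h1 : (1 + r) ^ 2 ≤ (2 + 4 / b) * Real.exp ((b / 2) * r ^ 2) := by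
    have h2 := Real.add_one_le_exp ((b / 2) * r ^ 2)
    have h3 : (2 + 4 / b) * ((b / 2) * r ^ 2 + 1) = b * r ^ 2 + 2 + 2 * r ^ 2 + 4 / b := by
      field_simp; ring
    have h4 : 0 < 4 / b := by positivity
    have h5 : 0 ≤ b * r ^ 2 := by positivity
    calc (1 + r) ^ 2 ≤ (2 + 4 / b) * ((b / 2) * r ^ 2 + 1) := by
          rw [h3]; nlinarith [sq_nonneg (1 - r)]
      _ ≤ _ := by gcongr
  calc _ ≤ ((2 + 4 / b) * Real.exp ((b / 2) * r ^ 2)) * Real.exp (-b * r ^ 2) := by gcongr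
    _ = _ := by rw [mul_assoc, ← Real.exp_add]; congr 2; ring

lemma aux_gauss_poly_integrable {b : ℝ} (hb : 0 < b) (x : V) :
    Integrable (fun y : V => (1 + ‖x - y‖) ^ 2 * Real.exp (-b * ‖x - y‖ ^ 2)) := by
  refine ((aux_gauss_integrable (half_pos hb) x).const_mul (2 + 4 / b)).mono'
    (by fun_prop) (Eventually.of_forall fun y => ?_)
  rw [Real.norm_of_nonneg (by positivity)]
  exact aux_poly_le hb _

variable {F : Type*} [NormedAddCommGroup F] [NormedSpace ℝ F]

lemma aux_integrable {c : ℝ} (hc : 0 < c) {w : V → ℝ} (hwm : Measurable w)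
    (hw0 : ∀ y, 0 ≤ w y) (hw1 : ∀ y, w y ≤ 1) (x : V) {g : V → F}
    (hg : AEStronglyMeasurable g) {A : ℝ} (hA : ∀ y, ‖g y‖ ≤ A * (1 + ‖x - y‖) ^ 2) :
    Integrable (fun y : V => (Real.exp (-(c / 2) * ‖x - y‖ ^ 2) * w y) • g y) := by
  refine ((aux_gauss_poly_integrable (half_pos hc) x).const_mul A).mono' ?_
    (Eventually.of_forall fun y => ?_)
  · refine AEStronglyMeasurable.smul ?_ hg
    exact (Measurable.mul (by fun_prop) hwm).aestronglyMeasurable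
  · rw [norm_smul, norm_mul, Real.norm_of_nonneg (hw0 y), Real.norm_of_nonneg (Real.exp_nonneg _)]
    calc _ ≤ (Real.exp (-(c / 2) * ‖x - y‖ ^ 2) * 1) * (A * (1 + ‖x - y‖) ^ 2) := by
          gcongr
          · exact hw1 y
          · exact hA y
      _ = _ := by ring

lemma aux_meas {c : ℝ} (x : V) {g : V → F} (hg : Continuous g) :
    AEStronglyMeasurable (fun y => (-c) • (innerSL ℝ (x - y)).smulRight (g y)) := by
  have : ProperSpace V := FiniteDimensional.proper_real V
  have : SecondCountableTopology V := inferInstance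
  have h : Continuous fun y => ContinuousLinearMap.smulRightL ℝ V F (innerSL ℝ (x - y)) (g y) := by
    fun_prop
  have h2 : Continuous (fun y => (-c) • (innerSL ℝ (x - y)).smulRight (g y)) := h.const_smul (-c)
  have : SecondCountableTopologyEither V (V →L[ℝ] F) := ⟨Or.inl inferInstance⟩
  exact h2.aestronglyMeasurable

lemma aux_one_le (x y : V) : 1 + ‖y‖ ≤ (1 + ‖x‖) * (1 + ‖x - y‖) := by
  have : ‖y‖ ≤ ‖x‖ + ‖x - y‖ := by
    have := norm_sub_le x (x - y)
    simpa using this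
  nlinarith [norm_nonneg x, norm_nonneg (x - y)]

lemma aux_hasFDerivAt {c : ℝ} (hc : 0 < c) {w : V → ℝ} (hwm : Measurable w)
    (hw0 : ∀ y, 0 ≤ w y) (hw1 : ∀ y, w y ≤ 1) (x : V) {g : V → F} (hg : Continuous g)
    (hgb : ∀ y, ‖g y‖ ≤ 1 + ‖y‖) :
    HasFDerivAt (fun z => ∫ y, (Real.exp (-(c / 2) * ‖z - y‖ ^ 2) * w y) • g y)
      (∫ y, (Real.exp (-(c / 2) * ‖x - y‖ ^ 2) * w y) •
        ((-c) • (innerSL ℝ (x - y)).smulRight (g y))) x := by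
  refine hasFDerivAt_integral_of_dominated_of_fderiv_le (s := Metric.ball x 1)
    (F' := fun z y => (Real.exp (-(c / 2) * ‖z - y‖ ^ 2) * w y) •
        ((-c) • (innerSL ℝ (z - y)).smulRight (g y)))
    (bound := fun y => (Real.exp (c / 2) * c * (1 + ‖x‖)) *
      ((1 + ‖x - y‖) ^ 2 * Real.exp (-(c / 4) * ‖x - y‖ ^ 2)))
    (Metric.ball_mem_nhds x one_pos) ?_ ?_ ?_ ?_ ?_ ?_
  · refine Eventually.of_forall fun z => ?_
    refine AEStronglyMeasurable.smul ?_ hg.aestronglyMeasurable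
    exact (Measurable.mul (by fun_prop) hwm).aestronglyMeasurable
  · refine aux_integrable hc hwm hw0 hw1 x hg.aestronglyMeasurable (A := 1 + ‖x‖) fun y => ?_
    refine (hgb y).trans ((aux_one_le x y).trans ?_)
    have := norm_nonneg (x - y)
    have := norm_nonneg x
    gcongr
    nlinarith
  · have hm : AEStronglyMeasurable (fun y : V => Real.exp (-(c / 2) * ‖x - y‖ ^ 2) * w y) :=
      (Measurable.mul (by fun_prop) hwm).aestronglyMeasurable
    exact hm.smul (aux_meas (c := c) x hg)
  · refine Eventually.of_forall fun y z hz => ?_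
    have hz' : ‖z - x‖ < 1 := by simpa [dist_eq_norm] using hz
    have h1 : ‖z - y‖ ≤ 1 + ‖x - y‖ := by
      have := norm_add_le (z - x) (x - y)
      simp only [sub_add_sub_cancel] at this
      linarith
    have h2 : ‖x - y‖ ≤ 1 + ‖z - y‖ := by
      have := norm_add_le (x - z) (z - y)
      rw [norm_sub_rev x z] at this
      simp only [sub_add_sub_cancel] at this
      linarith
    have h3 : -(c / 2) * ‖z - y‖ ^ 2 ≤ c / 2 + -(c / 4) * ‖x - y‖ ^ 2 := by
      have h4 : ‖x - y‖ ^ 2 ≤ 2 + 2 * ‖z - y‖ ^ 2 := by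
        nlinarith [sq_nonneg (1 - ‖z - y‖), norm_nonneg (x - y)]
      nlinarith
    have h5 : Real.exp (-(c / 2) * ‖z - y‖ ^ 2)
        ≤ Real.exp (c / 2) * Real.exp (-(c / 4) * ‖x - y‖ ^ 2) := by
      rw [← Real.exp_add]; exact Real.exp_le_exp.2 h3
    rw [norm_smul, norm_mul, norm_smul, Real.norm_of_nonneg (hw0 y),
      Real.norm_of_nonneg (Real.exp_nonneg _), norm_neg, Real.norm_of_nonneg hc.le,
      ContinuousLinearMap.norm_smulRight_apply, innerSL_apply_norm]
    calc _ ≤ (Real.exp (c / 2) * Real.exp (-(c / 4) * ‖x - y‖ ^ 2) * 1) *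
          (c * ((1 + ‖x - y‖) * ((1 + ‖x‖) * (1 + ‖x - y‖)))) := by
          gcongr
          · exact hw0 y
          · exact hw1 y
          · exact (hgb y).trans (aux_one_le x y)
      _ = _ := by ring
  · exact (aux_gauss_poly_integrable (by positivity) x).const_mul _
  · refine Eventually.of_forall fun y z _ => ?_
    have h1 : HasFDerivAt (fun z => ‖z - y‖ ^ 2) (2 • innerSL ℝ (z - y)) z := by
      simpa using ((hasFDerivAt_id z).sub_const y).norm_sq
    have h2 := ((((h1.const_mul (-(c / 2))).exp).mul_const (w y)).smul_const (g y))
    refine h2.congr_fderiv ?_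
    ext v
    simp only [ContinuousLinearMap.smulRight_apply, _root_.smul_apply, smul_smul,
      smul_eq_mul, nsmul_eq_mul]
    congr 1
    simp
    ring

lemma aux_deriv_integrable {c : ℝ} (hc : 0 < c) {w : V → ℝ} (hwm : Measurable w)
    (hw0 : ∀ y, 0 ≤ w y) (hw1 : ∀ y, w y ≤ 1) (x : V) {g : V → F} (hg : Continuous g)
    (hgb : ∀ y, ‖g y‖ ≤ 1 + ‖y‖) :
    Integrable (fun y => (Real.exp (-(c / 2) * ‖x - y‖ ^ 2) * w y) •
        ((-c) • (innerSL ℝ (x - y)).smulRight (g y))) := by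
  refine aux_integrable hc hwm hw0 hw1 x (aux_meas x hg)
    (A := c * (1 + ‖x‖)) fun y => ?_
  · rw [norm_smul, norm_neg, Real.norm_of_nonneg hc.le,
      ContinuousLinearMap.norm_smulRight_apply, innerSL_apply_norm]
    calc _ ≤ c * ((1 + ‖x - y‖) * ((1 + ‖x‖) * (1 + ‖x - y‖))) := by
          gcongr
          · linarith
          · exact (hgb y).trans (aux_one_le x y)
      _ = _ := by ring

end helpers

lemma aux_w_props (n : ℕ) (J : EuclideanSpace ℝ (Fin n) → EReal)
    (hJ_lsc : LowerSemicontinuous J)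
    (hJ_inf : (⨅ y : EuclideanSpace ℝ (Fin n), J y) = (0 : EReal)) (t ε : ℝ)
    (ht : 0 < t) (hε : 0 < ε) :
    ∃ w : EuclideanSpace ℝ (Fin n) → ℝ, Measurable w ∧ (∀ y, 0 ≤ w y) ∧ (∀ y, w y ≤ 1) ∧
      (∀ y, J y ≠ ⊤ → 0 < w y) ∧
      ∀ x y, heatIntegrand n J x t ε y = Real.exp (-((1 / (t * ε)) / 2) * ‖x - y‖ ^ 2) * w y := by
  have hJm : Measurable J := hJ_lsc.measurable
  refine ⟨fun y => if J y = ⊤ then 0 else Real.exp (-((J y).toReal / ε)), ?_, ?_, ?_, ?_, ?_⟩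
  · refine Measurable.ite (hJm (measurableSet_singleton ⊤)) measurable_const ?_
    exact Real.measurable_exp.comp ((hJm.ereal_toReal.div_const ε).neg)
  · intro y
    dsimp only
    split_ifs
    · exact le_rfl
    · exact Real.exp_nonneg _
  · intro y
    dsimp only
    split_ifs
    · exact zero_le_one
    · have h0 : (0 : EReal) ≤ J y := hJ_inf ▸ iInf_le J y
      have : 0 ≤ (J y).toReal := EReal.toReal_nonneg h0
      rw [Real.exp_le_one_iff]
      have : 0 ≤ (J y).toReal / ε := by positivity
      linarith
  · intro y hy
    simp only [hy, if_false]
    exact Real.exp_pos _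
  · intro x y
    unfold heatIntegrand
    dsimp only
    split_ifs
    · simp
    · rw [← Real.exp_add]
      congr 1
      field_simp
      ring

/-- For every `x`, `t > 0`, `ε > 0`, the posterior mean squared error satisfies
`E_J[‖y − u_PM(x,t,ε)‖²] = tε ∇ₓ·u_PM(x,t,ε) = ntε − t²ε ΔₓS_ε(x,t)`, where the maps
`x ↦ u_PM(x,t,ε)` and `x ↦ ∇ₓS_ε(x,t)` are differentiable and the Laplacian is the
divergence of the gradient. -/
theorem postVariance_eq_divergence (n : ℕ) (hn : 1 ≤ n)
    (J : EuclideanSpace ℝ (Fin n) → EReal)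
    (hJ_proper_bot : ∀ y, J y ≠ ⊥)
    (hJ_lsc : LowerSemicontinuous J)
    (hJ_convex : ∀ y₁ y₂ : EuclideanSpace ℝ (Fin n), ∀ a b : ℝ, 0 ≤ a → 0 ≤ b → a + b = 1 →
      J (a • y₁ + b • y₂) ≤ (a : EReal) * J y₁ + (b : EReal) * J y₂)
    (hJ_int : (interior {y : EuclideanSpace ℝ (Fin n) | J y ≠ ⊤}).Nonempty)
    (hJ_inf : (⨅ y : EuclideanSpace ℝ (Fin n), J y) = (0 : EReal))
    (x : EuclideanSpace ℝ (Fin n)) (t ε : ℝ) (ht : 0 < t) (hε : 0 < ε) :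
    Differentiable ℝ (fun z : EuclideanSpace ℝ (Fin n) => postMean n J z t ε) ∧
    Differentiable ℝ (fun z : EuclideanSpace ℝ (Fin n) =>
      gradient (fun z' : EuclideanSpace ℝ (Fin n) => viscSol n J z' t ε) z) ∧
    (partitionFn n J x t ε)⁻¹
        * ∫ y, heatIntegrand n J x t ε y * ‖y - postMean n J x t ε‖ ^ 2
      = t * ε * divergence n (fun z : EuclideanSpace ℝ (Fin n) => postMean n J z t ε) x ∧
    (partitionFn n J x t ε)⁻¹
        * ∫ y, heatIntegrand n J x t ε y * ‖y - postMean n J x t ε‖ ^ 2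
      = n * t * ε - t ^ 2 * ε * divergence n
          (fun z : EuclideanSpace ℝ (Fin n) =>
            gradient (fun z' : EuclideanSpace ℝ (Fin n) => viscSol n J z' t ε) z) x := by
  obtain ⟨w, hwm, hw0, hw1, hwpos, hheat⟩ := aux_w_props n J hJ_lsc hJ_inf t ε ht hε
  obtain ⟨c, hcdef⟩ : ∃ c : ℝ, c = 1 / (t * ε) := ⟨_, rfl⟩
  rw [← hcdef] at hheat
  have hc : 0 < c := by rw [hcdef]; positivity
  have hct : t * ε * c = 1 := by rw [hcdef]; field_simp
  set Z : EuclideanSpace ℝ (Fin n) → ℝ := fun z => partitionFn n J z t ε with hZdef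
  set M : EuclideanSpace ℝ (Fin n) → EuclideanSpace ℝ (Fin n) :=
    fun z => ∫ y, heatIntegrand n J z t ε y • y with hMdef
  set u : EuclideanSpace ℝ (Fin n) → EuclideanSpace ℝ (Fin n) :=
    fun z => postMean n J z t ε with hudef
  have hu : ∀ z, u z = (Z z)⁻¹ • M z := fun z => rfl
  have hint1 : ∀ z, Integrable (fun y => heatIntegrand n J z t ε y) := by
    intro z
    have := aux_integrable hc hwm hw0 hw1 z (g := fun _ => (1 : ℝ))
      continuous_const.aestronglyMeasurable (A := 1) (fun y => by
        have := norm_nonneg (z - y)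
        rw [norm_one]
        nlinarith)
    simpa [hheat] using this
  have hinty : ∀ z, Integrable (fun y => heatIntegrand n J z t ε y • y) := by
    intro z
    have := aux_integrable hc hwm hw0 hw1 z (g := fun y => y)
      continuous_id.aestronglyMeasurable (A := 1 + ‖z‖) (fun y => by
        have := norm_nonneg (z - y)
        have := norm_nonneg z
        have := aux_one_le z y
        have : (1 + ‖z - y‖) ≤ (1 + ‖z - y‖) ^ 2 := by nlinarith
        nlinarith)
    simpa [hheat] using this
  have hintyy : ∀ z, Integrable (fun y => heatIntegrand n J z t ε y * ‖y‖ ^ 2) := by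
    intro z
    have := aux_integrable hc hwm hw0 hw1 z (g := fun y => ‖y‖ ^ 2)
      (by fun_prop) (A := (1 + ‖z‖) ^ 2) (fun y => by
        have := norm_nonneg y
        rw [Real.norm_of_nonneg (by positivity), ← mul_pow]
        have := aux_one_le z y
        gcongr
        linarith)
    simpa [hheat] using this
  have hinti : ∀ z v, Integrable (fun y => heatIntegrand n J z t ε y * inner ℝ v y) := by
    intro z v
    have := (hinty z).const_inner (𝕜 := ℝ) v
    simpa [inner_smul_right] using this
  have hMi : ∀ z v, ∫ y, heatIntegrand n J z t ε y * inner ℝ v y = inner ℝ v (M z) := by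
    intro z v
    have := integral_inner (𝕜 := ℝ) (hinty z) v
    simpa [inner_smul_right] using this
  have hZpos : ∀ z, 0 < Z z := by
    intro z
    have hnn : 0 ≤ fun y => heatIntegrand n J z t ε y := by
      intro y
      simp only [hheat, Pi.zero_apply]
      exact mul_nonneg (Real.exp_nonneg _) (hw0 y)
    refine (integral_pos_iff_support_of_nonneg hnn (hint1 z)).2 ?_
    refine lt_of_lt_of_le (isOpen_interior.measure_pos volume hJ_int) (measure_mono ?_)
    intro y hy
    have : J y ≠ ⊤ := interior_subset hy
    simp only [Function.mem_support, hheat]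
    exact (mul_pos (Real.exp_pos _) (hwpos y this)).ne'
  have hZd : ∀ z, HasFDerivAt Z (c • innerSL ℝ (M z - Z z • z)) z := by
    intro z
    have hg : Continuous (fun _ : EuclideanSpace ℝ (Fin n) => (1 : ℝ)) := continuous_const
    have hgb : ∀ y : EuclideanSpace ℝ (Fin n), ‖(1 : ℝ)‖ ≤ 1 + ‖y‖ := by
      intro y; rw [norm_one]; linarith [norm_nonneg y]
    have h := aux_hasFDerivAt hc hwm hw0 hw1 z hg hgb
    have hi := aux_deriv_integrable hc hwm hw0 hw1 z hg hgb
    simp only [← hheat] at h hi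
    have hZ' : Z = fun z => ∫ y, heatIntegrand n J z t ε y • (1 : ℝ) := by
      funext z
      simp only [smul_eq_mul, mul_one]
      rfl
    rw [← hZ'] at h
    refine h.congr_fderiv ?_
    ext v
    rw [ContinuousLinearMap.integral_apply hi]
    have : ∀ y, (heatIntegrand n J z t ε y • ((-c) •
        (innerSL ℝ (z - y)).smulRight (1 : ℝ))) v
        = c * (heatIntegrand n J z t ε y * inner ℝ v y)
          - c * inner ℝ z v * heatIntegrand n J z t ε y := by
      intro y
      simp [inner_sub_left, real_inner_comm y v]
      ring
    simp_rw [this]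
    rw [integral_sub ((hinti z v).const_mul c) ((hint1 z).const_mul _), integral_const_mul,
      integral_const_mul, hMi]
    change _ - c * inner ℝ z v * Z z = _
    simp [inner_sub_left, inner_smul_left, real_inner_comm v (M z)]
    ring
  have hMd : ∀ z, ∃ M' : EuclideanSpace ℝ (Fin n) →L[ℝ] EuclideanSpace ℝ (Fin n),
      HasFDerivAt M M' z ∧ ∑ i, (M' (EuclideanSpace.single i 1)) i =
        c * ((∫ y, heatIntegrand n J z t ε y * ‖y‖ ^ 2) - inner ℝ z (M z)) := by
    intro z
    have hg : Continuous (fun y : EuclideanSpace ℝ (Fin n) => y) := continuous_id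
    have hgb : ∀ y : EuclideanSpace ℝ (Fin n), ‖y‖ ≤ 1 + ‖y‖ := by
      intro y; linarith
    have h := aux_hasFDerivAt hc hwm hw0 hw1 z hg hgb
    have hi := aux_deriv_integrable hc hwm hw0 hw1 z hg hgb
    simp only [← hheat] at h hi
    refine ⟨_, h, ?_⟩
    have h1 : ∀ i : Fin n, ((∫ y, heatIntegrand n J z t ε y • ((-c) •
        (innerSL ℝ (z - y)).smulRight y)) (EuclideanSpace.single i 1)) i
        = ∫ y, heatIntegrand n J z t ε y * ((-c) * ((z i - y i) * y i)) := by
      intro i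
      rw [ContinuousLinearMap.integral_apply hi]
      have h2 := (EuclideanSpace.proj i : EuclideanSpace ℝ (Fin n) →L[ℝ] ℝ).integral_comp_comm
        (hi.apply_continuousLinearMap (EuclideanSpace.single i (1 : ℝ)))
      refine Eq.trans h2.symm ?_
      congr 1
      ext y
      simp [EuclideanSpace.inner_single_right]
    have h3 : ∀ i : Fin n, Integrable fun y : EuclideanSpace ℝ (Fin n) =>
        heatIntegrand n J z t ε y * ((-c) * ((z i - y i) * y i)) := by
      intro i
      have h2 := (EuclideanSpace.proj i : EuclideanSpace ℝ (Fin n) →L[ℝ] ℝ).integrable_comp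
        (hi.apply_continuousLinearMap (EuclideanSpace.single i (1 : ℝ)))
      refine h2.congr (Eventually.of_forall fun y => ?_)
      simp [EuclideanSpace.inner_single_right]
    simp_rw [h1]
    rw [← integral_finsetSum _ (fun i _ => h3 i)]
    have h4 : ∀ y : EuclideanSpace ℝ (Fin n),
        ∑ i, heatIntegrand n J z t ε y * ((-c) * ((z i - y i) * y i))
        = c * (heatIntegrand n J z t ε y * ‖y‖ ^ 2) -
          c * (heatIntegrand n J z t ε y * inner ℝ z y) := by
      intro y
      rw [EuclideanSpace.real_norm_sq_eq, PiLp.inner_apply]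
      simp only [Finset.mul_sum]
      rw [← Finset.sum_sub_distrib]
      refine Finset.sum_congr rfl fun i _ => ?_
      simp
      ring
    simp_rw [h4]
    rw [integral_sub ((hintyy z).const_mul c) ((hinti z z).const_mul c), integral_const_mul,
      integral_const_mul, hMi]
    ring
  have hud : ∀ z, DifferentiableAt ℝ u z := by
    intro z
    obtain ⟨M', hM', -⟩ := hMd z
    exact ((hZd z).differentiableAt.inv (hZpos z).ne').smul hM'.differentiableAt
  have hgrad : ∀ z, gradient (fun z' => viscSol n J z' t ε) z = (1 / t) • (z - u z) := by
    intro z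
    apply HasGradientAt.gradient
    rw [hasGradientAt_iff_hasFDerivAt]
    have hK : 0 < (2 * Real.pi * t * ε) ^ (-(n : ℝ) / 2) := by positivity
    have h := (((hZd z).const_mul ((2 * Real.pi * t * ε) ^ (-(n : ℝ) / 2))).log
      (mul_pos hK (hZpos z)).ne').const_mul (-ε)
    refine h.congr_fderiv ?_
    ext v
    have hz := (hZpos z).ne'
    have hcε : ε * c = 1 / t := by rw [hcdef]; field_simp
    simp [hu, inner_sub_left, inner_smul_left]
    generalize (2 * Real.pi * t * ε) ^ (-(n : ℝ) / 2) = K at hK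
    have hK' := hK.ne'
    rw [hcdef]
    field_simp
    ring
  have hgradf : (fun z => gradient (fun z' => viscSol n J z' t ε) z)
      = fun z => (1 / t) • (z - u z) := funext hgrad
  have hdiv : divergence n u x =
      c * ((Z x)⁻¹ * (∫ y, heatIntegrand n J x t ε y * ‖y‖ ^ 2) - ‖u x‖ ^ 2) := by
    obtain ⟨M', hM', hsum⟩ := hMd x
    have hz := (hZpos x).ne'
    have hZi : HasFDerivAt (fun z => (Z z)⁻¹) _ x := (hasDerivAt_inv hz).comp_hasFDerivAt x (hZd x)
    have hux : HasFDerivAt u _ x := hZi.smul hM'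
    unfold divergence
    rw [hux.fderiv]
    have h1 : ∀ i : Fin n, innerSL ℝ (M x - Z x • x) (EuclideanSpace.single i (1 : ℝ))
        = M x i - Z x * x i := by
      intro i
      simp [EuclideanSpace.inner_single_right]
    have h2 : ∑ i, (M x i - Z x * x i) * M x i = ‖M x‖ ^ 2 - Z x * inner ℝ x (M x) := by
      rw [EuclideanSpace.real_norm_sq_eq, PiLp.inner_apply, Finset.mul_sum,
        ← Finset.sum_sub_distrib]
      refine Finset.sum_congr rfl fun i _ => ?_
      simp
      ring
    have h3 : ‖u x‖ ^ 2 = ((Z x)⁻¹) ^ 2 * ‖M x‖ ^ 2 := by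
      rw [hu, norm_smul, mul_pow, Real.norm_eq_abs, sq_abs]
    calc _ = ∑ i, ((Z x)⁻¹ * (M' (EuclideanSpace.single i 1)) i
          - c * ((Z x)⁻¹) ^ 2 * ((M x i - Z x * x i) * M x i)) := by
          refine Finset.sum_congr rfl fun i _ => ?_
          rw [← h1 i]
          simp
          ring
      _ = _ := by
          rw [Finset.sum_sub_distrib, ← Finset.mul_sum, ← Finset.mul_sum, hsum, h2, h3]
          field_simp
          ring
  have hvar : (partitionFn n J x t ε)⁻¹
        * ∫ y, heatIntegrand n J x t ε y * ‖y - postMean n J x t ε‖ ^ 2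
      = (Z x)⁻¹ * (∫ y, heatIntegrand n J x t ε y * ‖y‖ ^ 2) - ‖u x‖ ^ 2 := by
    change (Z x)⁻¹ * ∫ y, heatIntegrand n J x t ε y * ‖y - u x‖ ^ 2 = _
    have hz := (hZpos x).ne'
    have h1 : ∀ y, heatIntegrand n J x t ε y * ‖y - u x‖ ^ 2
        = heatIntegrand n J x t ε y * ‖y‖ ^ 2
          - 2 * (heatIntegrand n J x t ε y * inner ℝ (u x) y)
          + ‖u x‖ ^ 2 * heatIntegrand n J x t ε y := by
      intro y
      rw [norm_sub_sq_real, real_inner_comm]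
      ring
    simp_rw [h1]
    have hs : Integrable (fun y => heatIntegrand n J x t ε y * ‖y‖ ^ 2
          - 2 * (heatIntegrand n J x t ε y * inner ℝ (u x) y)) :=
      (hintyy x).sub ((hinti x (u x)).const_mul 2)
    rw [integral_add hs ((hint1 x).const_mul _),
      integral_sub (hintyy x) ((hinti x (u x)).const_mul 2), integral_const_mul,
      integral_const_mul, hMi]
    change (Z x)⁻¹ * (_ - _ + ‖u x‖ ^ 2 * Z x) = _
    have hM : M x = Z x • u x := by rw [hu, smul_smul, mul_inv_cancel₀ hz, one_smul]
    rw [hM, inner_smul_right, real_inner_self_eq_norm_sq]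
    field_simp
    ring
  have hdivg : divergence n (fun z => (1 / t) • (z - u z)) x
      = (1 / t) * (n - divergence n u x) := by
    have h := (((hasFDerivAt_id x).sub (hud x).hasFDerivAt).const_smul (1 / t))
    have h' : HasFDerivAt (fun z => (1 / t) • (z - u z)) _ x := h
    unfold divergence
    rw [h'.fderiv]
    simp [mul_sub, Finset.sum_sub_distrib, Finset.mul_sum]
    ring
  refine ⟨hud, ?_, ?_, ?_⟩
  · rw [hgradf]
    intro z
    exact (differentiableAt_id.sub (hud z)).const_smul (1 / t)
  · rw [hvar, hdiv, ← mul_assoc, hct, one_mul]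
  · rw [hgradf, hdivg, hvar]
    have : divergence n u x * (t * ε) =
      ((Z x)⁻¹ * (∫ y, heatIntegrand n J x t ε y * ‖y‖ ^ 2) - ‖u x‖ ^ 2) := by
      rw [hdiv, mul_comm, ← mul_assoc, hct, one_mul]
    rw [← this]
    field_simp
    ring
end
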